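/- arXiv:2411.14504 — 4 statements merged into one kernel-verified Lean document; each statement's English description precedes it below -/
import Mathlib

section
/- Let E, e : ℝ × ℝ → ℝ and R, C : ℝ → ℝ satisfy E(λ, x) = e(λ, x) · R(λ) · C(x) for all (λ, x), where e(λ, x) > 0, R(λ) > 0, and C(x) > 0 everywhere, e is twice continuously differentiable, and R is differentiable. Then for every (λ, x): ∂/∂x [ (1 / E(λ, x)) · ∂E/∂λ(λ, x) ] = ∂/∂x [ (1 / e(λ, x)) · ∂e/∂λ(λ, x) ]. That is, the quantity N_{λx} = ∂/∂x { (1/E) ∂E/∂λ } computed from the observed spectrum E depends only on the illumination e and is invariant to the reflectance factors R(λ) and C(x). -/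
/-!
The quotient `(1/E) ∂E/∂λ` is the logarithmic derivative of `E` in `λ`. For the product
`e(λ, x) R(λ) C(x)` the factor `C(x)` is constant in `λ` and cancels, leaving
`R'(λ)/R(λ) + (1/e) ∂e/∂λ`. The first summand does not depend on `x`, so `∂/∂x` removes it.
-/

/-- Partial derivative of `F : ℝ × ℝ → ℝ` with respect to its first argument `λ`. -/
noncomputable def pdL (F : ℝ × ℝ → ℝ) (l x : ℝ) : ℝ := deriv (fun t => F (t, x)) l

/-- If `E(λ, x) = e(λ, x) · R(λ) · C(x)` with `e, R, C` positive, `e` twice continuously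
differentiable and `R` differentiable, then the first-order color invariant
`N_{λx} = ∂/∂x { (1/E) ∂E/∂λ }` computed from `E` depends only on the illumination `e`:
it equals `∂/∂x { (1/e) ∂e/∂λ }`, invariant to the reflectance factors `R(λ)` and `C(x)`. -/
theorem first_invariant_depends_only_on_illumination
    (E e : ℝ × ℝ → ℝ) (R C : ℝ → ℝ)
    (hE : ∀ l x : ℝ, E (l, x) = e (l, x) * R l * C x)
    (he_pos : ∀ l x : ℝ, 0 < e (l, x))
    (hR_pos : ∀ l : ℝ, 0 < R l)
    (hC_pos : ∀ x : ℝ, 0 < C x)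
    (he_smooth : ContDiff ℝ 2 e)
    (hR_diff : Differentiable ℝ R) :
    ∀ l x : ℝ,
      deriv (fun t => (1 / E (l, t)) * pdL E l t) x
        = deriv (fun t => (1 / e (l, t)) * pdL e l t) x := by
  intro l x
  have key : ∀ t : ℝ,
      (1 / E (l, t)) * pdL E l t = deriv R l / R l + (1 / e (l, t)) * pdL e l t := by
    intro t
    have he : DifferentiableAt ℝ (fun s => e (s, t)) l :=
      ((he_smooth.differentiable (by norm_num)).comp
        (differentiable_id.prodMk (differentiable_const t))) l
    have hd : pdL E l t = (pdL e l t * R l + e (l, t) * deriv R l) * C t := by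
      simp only [pdL, hE]
      exact ((he.hasDerivAt.mul (hR_diff l).hasDerivAt).mul_const (C t)).deriv
    have h1 := (he_pos l t).ne'
    have h2 := (hR_pos l).ne'
    have h3 := (hC_pos t).ne'
    rw [hd, hE]
    field_simp
    ring
  simp only [key, deriv_const_add]
end

section
/- Let E, e : ℝ × ℝ → ℝ and R, C : ℝ → ℝ satisfy E(λ, x) = e(λ, x) · R(λ) · C(x) for all (λ, x), where e(λ, x) > 0, R(λ) > 0, and C(x) > 0 everywhere, e is smooth (infinitely differentiable), and R is smooth. Then for all integers m ≥ 1 and n ≥ 1 and every (λ, x): ∂^{m+n-2}/∂λ^{m-1}∂x^{n-1} applied to ∂/∂x { (1/E(λ, x)) ∂E/∂λ(λ, x) } equals ∂^{m+n-1}/∂λ^{m-1}∂x^{n} applied to { (1/e(λ, x)) ∂e/∂λ(λ, x) }. That is, every invariant N_{λ^m x^n} = ∂^{m+n-2}/∂λ^{m-1}∂x^{n-1} [ ∂/∂x { (1/E) ∂E/∂λ } ] computed from the observed spectrum E coincides with the corresponding expression computed from the illumination spectrum e alone, independently of the reflectance factors R(λ) and C(x). -/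
/-- The logarithmic `λ`-derivative `(1/F) ∂F/∂λ` of `F : ℝ × ℝ → ℝ`. -/
noncomputable def logDL (F : ℝ × ℝ → ℝ) (l x : ℝ) : ℝ := (1 / F (l, x)) * pdL F l x

/-- The first-order color invariant `N_{λx}[F] = ∂/∂x { (1/F) ∂F/∂λ }`. -/
noncomputable def NlX (F : ℝ × ℝ → ℝ) (l x : ℝ) : ℝ := deriv (fun t => logDL F l t) x

/-- Logarithmic differentiation in `λ` turns the product `e · R · C` into a sum: the factor `C(x)`
contributes nothing and `R` contributes a term that does not depend on `x`. -/
lemma logDL_eq_add_logDeriv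
    (E e : ℝ × ℝ → ℝ) (R C : ℝ → ℝ)
    (hE : ∀ l x : ℝ, E (l, x) = e (l, x) * R l * C x)
    (he : ∀ l x : ℝ, e (l, x) ≠ 0) (hR : ∀ l : ℝ, R l ≠ 0) (hC : ∀ x : ℝ, C x ≠ 0)
    (hed : Differentiable ℝ e) (hRd : Differentiable ℝ R) (l x : ℝ) :
    logDL E l x = logDL e l x + deriv R l / R l := by
  have hed' : DifferentiableAt ℝ (fun t => e (t, x)) l := by fun_prop
  have hpd : pdL E l x = (pdL e l x * R l + e (l, x) * deriv R l) * C x := by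
    simp only [pdL, hE]
    exact ((hed'.hasDerivAt.mul (hRd l).hasDerivAt).mul_const (C x)).deriv
  have h1 := he l x
  have h2 := hR l
  have h3 := hC x
  rw [logDL, logDL, hpd, hE]
  field_simp

/-- If `E(λ, x) = e(λ, x) · R(λ) · C(x)` with `e, R, C` positive and `e, R` smooth, then for all
`m, n ≥ 1` the invariant `N_{λ^m x^n}[E] = ∂^{m-1}_λ ∂^{n-1}_x [ ∂/∂x { (1/E) ∂E/∂λ } ]`
equals `∂^{m-1}_λ ∂^n_x { (1/e) ∂e/∂λ }`, computed from the illumination spectrum alone,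
independently of the reflectance factors `R(λ)` and `C(x)`. -/
theorem invariants_depend_only_on_illumination
    (E e : ℝ × ℝ → ℝ) (R C : ℝ → ℝ)
    (hE : ∀ l x : ℝ, E (l, x) = e (l, x) * R l * C x)
    (he_pos : ∀ l x : ℝ, 0 < e (l, x))
    (hR_pos : ∀ l : ℝ, 0 < R l)
    (hC_pos : ∀ x : ℝ, 0 < C x)
    (he_smooth : ContDiff ℝ (⊤ : ℕ∞) e)
    (hR_smooth : ContDiff ℝ (⊤ : ℕ∞) R) :
    ∀ m n : ℕ, 1 ≤ m → 1 ≤ n → ∀ l x : ℝ,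
      deriv^[m - 1] (fun s => deriv^[n - 1] (fun t => NlX E s t) x) l
        = deriv^[m - 1] (fun s => deriv^[n] (fun t => logDL e s t) x) l := by
  intro m n _ hn l x
  have hN : ∀ s : ℝ, (fun t => NlX E s t) = deriv (fun t => logDL e s t) := by
    intro s
    funext t
    have h : (fun u => logDL E s u) = fun u => logDL e s u + deriv R s / R s :=
      funext fun u => logDL_eq_add_logDeriv E e R C hE (fun l x => (he_pos l x).ne')
        (fun l => (hR_pos l).ne') (fun x => (hC_pos x).ne')
        (he_smooth.differentiable (by simp)) (hR_smooth.differentiable (by simp)) s u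
    rw [NlX, h, deriv_add_const]
  obtain ⟨k, rfl⟩ := Nat.exists_eq_add_of_le' hn
  simp only [hN, Nat.add_sub_cancel, Function.iterate_succ_apply]
end

section
/- Let E, e : ℝ × ℝ × ℝ → ℝ, R : ℝ → ℝ, and C : ℝ × ℝ → ℝ satisfy E(λ, x, y) = e(λ, x, y) · R(λ) · C(x, y) for all (λ, x, y), where all four functions are everywhere positive, e is smooth, R is smooth, and C is smooth. Define, for a positive smooth function F of (λ, x, y): N_{λx}[F] = ∂/∂x { (1/F) ∂F/∂λ }, N_{λλx}[F] = ∂/∂λ ∂/∂x { (1/F) ∂F/∂λ }, N_{λy}[F] = ∂/∂y { (1/F) ∂F/∂λ }, N_{λλy}[F] = ∂/∂λ ∂/∂y { (1/F) ∂F/∂λ }, and the combined detector N[F] = sqrt( N_{λx}[F]² + N_{λλx}[F]² + N_{λy}[F]² + N_{λλy}[F]² ). Then N[E](λ, x, y) = N[e](λ, x, y) for every (λ, x, y); that is, the combined light-effects detector computed from the observed spectrum depends only on the illumination spectrum e and is invariant to the reflectance factors R(λ) and C(x, y). -/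
/-! The factor `C(x, y)` cancels in the logarithmic `λ`-derivative, and `R(λ)` contributes only the
additive term `R' / R`, which is constant in `x` and `y` (`logD3_of_factorization`). Every spatial
derivative kills that term, so `N_{λx}` and `N_{λy}` agree for `E` and `e` as functions, and hence
so do their `λ`-derivatives. -/

/-- Partial derivative of `F : ℝ × ℝ × ℝ → ℝ` with respect to its first argument `λ`. -/
noncomputable def pdL3 (F : ℝ × ℝ × ℝ → ℝ) (l x y : ℝ) : ℝ := deriv (fun s => F (s, x, y)) l

/-- The logarithmic `λ`-derivative `(1/F) ∂F/∂λ` of `F : ℝ × ℝ × ℝ → ℝ`. -/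
noncomputable def logD3 (F : ℝ × ℝ × ℝ → ℝ) (l x y : ℝ) : ℝ :=
  (1 / F (l, x, y)) * pdL3 F l x y

/-- The invariant `N_{λx}[F] = ∂/∂x { (1/F) ∂F/∂λ }`. -/
noncomputable def NlX3 (F : ℝ × ℝ × ℝ → ℝ) (l x y : ℝ) : ℝ :=
  deriv (fun t => logD3 F l t y) x

/-- The invariant `N_{λλx}[F] = ∂/∂λ ∂/∂x { (1/F) ∂F/∂λ }`. -/
noncomputable def NllX3 (F : ℝ × ℝ × ℝ → ℝ) (l x y : ℝ) : ℝ :=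
  deriv (fun s => NlX3 F s x y) l

/-- The invariant `N_{λy}[F] = ∂/∂y { (1/F) ∂F/∂λ }`. -/
noncomputable def NlY3 (F : ℝ × ℝ × ℝ → ℝ) (l x y : ℝ) : ℝ :=
  deriv (fun t => logD3 F l x t) y

/-- The invariant `N_{λλy}[F] = ∂/∂λ ∂/∂y { (1/F) ∂F/∂λ }`. -/
noncomputable def NllY3 (F : ℝ × ℝ × ℝ → ℝ) (l x y : ℝ) : ℝ :=
  deriv (fun s => NlY3 F s x y) l

/-- The combined light-effects detector
`N[F] = sqrt( N_{λx}² + N_{λλx}² + N_{λy}² + N_{λλy}² )`. -/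
noncomputable def Ndet (F : ℝ × ℝ × ℝ → ℝ) (l x y : ℝ) : ℝ :=
  Real.sqrt ((NlX3 F l x y) ^ 2 + (NllX3 F l x y) ^ 2
    + (NlY3 F l x y) ^ 2 + (NllY3 F l x y) ^ 2)

theorem logD3_of_factorization
    {E e : ℝ × ℝ × ℝ → ℝ} {R : ℝ → ℝ} {C : ℝ × ℝ → ℝ}
    (hE : ∀ l x y : ℝ, E (l, x, y) = e (l, x, y) * R l * C (x, y))
    (he_pos : ∀ l x y : ℝ, 0 < e (l, x, y))
    (hR_pos : ∀ l : ℝ, 0 < R l)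
    (hC_pos : ∀ x y : ℝ, 0 < C (x, y))
    (he : Differentiable ℝ e) (hR : Differentiable ℝ R) (l x y : ℝ) :
    logD3 E l x y = logD3 e l x y + deriv R l / R l := by
  have he' : DifferentiableAt ℝ (fun s => e (s, x, y)) l := by fun_prop
  have hd : deriv (fun s => e (s, x, y) * R s * C (x, y)) l =
      (deriv (fun s => e (s, x, y)) l * R l + e (l, x, y) * deriv R l) * C (x, y) :=
    ((he'.hasDerivAt.mul (hR l).hasDerivAt).mul_const _).deriv
  have h1 := (he_pos l x y).ne'
  have h2 := (hR_pos l).ne'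
  have h3 := (hC_pos x y).ne'
  simp only [logD3, pdL3, hE, hd]
  field_simp

/-- If `E(λ, x, y) = e(λ, x, y) · R(λ) · C(x, y)` with all four functions positive and
`e, R, C` smooth, then the combined light-effects detector computed from the observed
spectrum depends only on the illumination: `N[E] = N[e]` everywhere, invariant to the
reflectance factors `R(λ)` and `C(x, y)`. -/
theorem combined_detector_depends_only_on_illumination
    (E e : ℝ × ℝ × ℝ → ℝ) (R : ℝ → ℝ) (C : ℝ × ℝ → ℝ)
    (hE : ∀ l x y : ℝ, E (l, x, y) = e (l, x, y) * R l * C (x, y))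
    (hE_pos : ∀ l x y : ℝ, 0 < E (l, x, y))
    (he_pos : ∀ l x y : ℝ, 0 < e (l, x, y))
    (hR_pos : ∀ l : ℝ, 0 < R l)
    (hC_pos : ∀ x y : ℝ, 0 < C (x, y))
    (he_smooth : ContDiff ℝ (⊤ : ℕ∞) e)
    (hR_smooth : ContDiff ℝ (⊤ : ℕ∞) R)
    (hC_smooth : ContDiff ℝ (⊤ : ℕ∞) C) :
    ∀ l x y : ℝ, Ndet E l x y = Ndet e l x y := by
  have hlog := logD3_of_factorization hE he_pos hR_pos hC_pos
    (he_smooth.differentiable (by simp)) (hR_smooth.differentiable (by simp))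
  have hX : NlX3 E = NlX3 e := by
    funext l x y
    simp only [NlX3, hlog, deriv_add_const]
  have hY : NlY3 E = NlY3 e := by
    funext l x y
    simp only [NlY3, hlog, deriv_add_const]
  intro l x y
  simp only [Ndet, NllX3, NllY3, hX, hY]
end

section
/- Let E, e : ℝ × ℝ → ℝ and R, C : ℝ → ℝ satisfy E(λ, x) = e(λ, x) · R(λ) · C(x) for all (λ, x), with all four functions everywhere positive, e three times continuously differentiable, and R twice continuously differentiable. Then for every (λ, x): ∂/∂λ ∂/∂x [ (1/E(λ, x)) ∂E/∂λ(λ, x) ] = ∂/∂λ ∂/∂x [ (1/e(λ, x)) ∂e/∂λ(λ, x) ]. That is, the second-order invariant N_{λλx} computed from the observed spectrum E equals the corresponding expression computed from the illumination spectrum e alone, independently of R(λ) and C(x). -/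
/-- If `E(λ, x) = e(λ, x) · R(λ) · C(x)` with all four functions positive, `e` three times
continuously differentiable and `R` twice continuously differentiable, then the second-order
invariant `N_{λλx} = ∂/∂λ ∂/∂x { (1/E) ∂E/∂λ }` computed from the observed spectrum `E`
equals the corresponding expression computed from the illumination spectrum `e` alone,
independently of `R(λ)` and `C(x)`. -/
theorem second_invariant_depends_only_on_illumination
    (E e : ℝ × ℝ → ℝ) (R C : ℝ → ℝ)
    (hE : ∀ l x : ℝ, E (l, x) = e (l, x) * R l * C x)
    (hE_pos : ∀ l x : ℝ, 0 < E (l, x))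
    (he_pos : ∀ l x : ℝ, 0 < e (l, x))
    (hR_pos : ∀ l : ℝ, 0 < R l)
    (hC_pos : ∀ x : ℝ, 0 < C x)
    (he_smooth : ContDiff ℝ 3 e)
    (hR_smooth : ContDiff ℝ 2 R) :
    ∀ l x : ℝ,
      deriv (fun s => deriv (fun t => (1 / E (s, t)) * pdL E s t) x) l
        = deriv (fun s => deriv (fun t => (1 / e (s, t)) * pdL e s t) x) l := by
  intro l x
  have key : ∀ s t : ℝ, (1 / E (s, t)) * pdL E s t
      = (1 / e (s, t)) * pdL e s t + deriv R s / R s := by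
    intro s t
    have h1 : DifferentiableAt ℝ (fun u => e (u, t)) s :=
      ((he_smooth.differentiable (by norm_num)).comp
        (differentiable_id.prodMk (differentiable_const t))) s
    have h2 : DifferentiableAt ℝ R s := hR_smooth.differentiable (by norm_num) s
    have hd : pdL E s t = (pdL e s t * R s + e (s, t) * deriv R s) * C t := by
      simp only [pdL, hE]
      exact ((h1.hasDerivAt.mul h2.hasDerivAt).mul_const (C t)).deriv
    have he := (he_pos s t).ne'
    have hR := (hR_pos s).ne'
    have hC := (hC_pos t).ne'
    rw [hd, hE]
    field_simp
  -- The term `deriv R s / R s` is constant in `t`, so the `t`-derivative annihilates it.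
  simp only [key, deriv_add_const]
end
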